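/- Let $B$ be a unital complex Banach algebra. A $B$-valued Banach noncommutative probability space is a pair $(A,E)$ where $A$ is a unital complex Banach algebra containing an isometrically embedded copy of $B$ as a unital subalgebra and $E:A\to B$ is a bounded linear projection onto $B$ with $E(b_1ab_2)=b_1E(a)b_2$ for all $a\in A$, $b_1,b_2\in B$. For $a\in A$ and $k\ge 1$ let $\mu_{a,k}(b_1,\dots,b_k)=E(b_1ab_2a\cdots b_ka)$ be the $k$th moment function of $a$, and let $\Psi_a(b)=E((1-ba)^{-1})-1$ for $b\in B$ near $0$. If $E(a)$ is invertible in $B$, then $\Psi_a$ has a local compositional inverse $\Psi_a^{\langle -1\rangle}$ analytic near $0$, there is a unique analytic germ $H_a$ at $0$ with $\Psi_a^{\langle -1\rangle}(b)=bH_a(b)$, and the S-transform of $a$ is $S_a(b)=(1+b)H_a(b)$. For an analytic $B$-valued function $F$ near $0\in B$, write $F(b)=F_0+\sum_{n\ge1}F_n(b,\dots,b)$ for its power series expansion about $0$, with $F_n$ symmetric bounded $n$-multilinear maps ($F_n$ is $1/n!$ times the $n$-fold Fréchet derivative of $F$ at $0$). Let $(A,E)$ and $(A',E')$ be $B$-valued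 Banach noncommutative probability spaces, and let $a\in A$ and $a'\in A'$ with $E(a)$ and $E'(a')$ invertible in $B$. Fix $n\ge 0$. If $\mu_{a,k}=\mu_{a',k}$ for all $k=1,\dots,n+1$, then the $n$th terms of the power series expansions about $0$ of the S-transforms coincide: $(S_a)_n(b,\dots,b)=(S_{a'})_n(b,\dots,b)$ for all $b\in B$. -/

import Mathlib

open scoped Topology
open Filter

noncomputable section

/-- A `B`-valued Banach noncommutative probability space structure on the unital Banach algebra
`A`: a unital isometric embedding `ι` of `B` in `A`, and a bounded linear map `E : A → B` with
`E b = b` on `B` and `E (b₁ a b₂) = b₁ (E a) b₂`. -/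
structure BanachNCPS (B A : Type*) [NormedRing B] [NormedAlgebra ℂ B]
    [NormedRing A] [NormedAlgebra ℂ A] where
  ι : B →ₐ[ℂ] A
  isometry : Isometry ι
  E : A →L[ℂ] B
  E_ι : ∀ b : B, E (ι b) = b
  cond_exp : ∀ (a : A) (b₁ b₂ : B), E (ι b₁ * a * ι b₂) = b₁ * E a * b₂

namespace BanachNCPS

variable {B A : Type*} [NormedRing B] [NormedAlgebra ℂ B] [NormedRing A] [NormedAlgebra ℂ A]

/-- The `k`-th moment function `μ_{a,k}(b₁,…,b_k) = E(b₁ a b₂ a ⋯ b_k a)`. -/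
def moment (P : BanachNCPS B A) (a : A) (k : ℕ) (b : Fin k → B) : B :=
  P.E (List.ofFn fun j => P.ι (b j) * a).prod

/-- `Ψ_a(b) = E((1 - ba)⁻¹) - 1`. Only the values for `b` near `0`, where `1 - ba` is invertible,
are relevant; elsewhere `Ring.inverse` is a default value. -/
def Psi (P : BanachNCPS B A) (a : A) (b : B) : B :=
  P.E (Ring.inverse (1 - P.ι b * a)) - 1

/-- `G` is, near `0`, an analytic compositional inverse of `F` (where `F 0 = 0`). -/
structure IsLocalInverse (F G : B → B) : Prop where
  analyticAt : AnalyticAt ℂ G 0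
  map_zero : G 0 = 0
  right_inv : ∀ᶠ b in 𝓝 (0 : B), F (G b) = b
  left_inv : ∀ᶠ b in 𝓝 (0 : B), G (F b) = b

theorem isLocalInverse_unique {F G G' : B → B}
    (h : IsLocalInverse F G) (h' : IsLocalInverse F G') : G =ᶠ[𝓝 0] G' := by
  have ht : Tendsto G' (𝓝 0) (𝓝 0) := by
    have := h'.analyticAt.continuousAt.tendsto
    rwa [h'.map_zero] at this
  filter_upwards [h'.right_inv, ht.eventually h.left_inv] with b h1 h2
  rw [h1] at h2
  exact h2

/-- The auxiliary function `Φ_a(b) = E(a (1 - ba)⁻¹)`, which satisfies `Ψ_a(b) = b Φ_a(b)`. -/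
def Phi (P : BanachNCPS B A) (a : A) (b : B) : B :=
  P.E (a * Ring.inverse (1 - P.ι b * a))

theorem analyticAt_ι (P : BanachNCPS B A) (x : B) : AnalyticAt ℂ P.ι x :=
  (⟨P.ι.toLinearMap, P.isometry.continuous⟩ : B →L[ℂ] A).analyticAt x

theorem Phi_zero (P : BanachNCPS B A) (a : A) : P.Phi a 0 = P.E a := by simp [Phi]

theorem Psi_zero (P : BanachNCPS B A) (a : A) : P.Psi a 0 = 0 := by
  have : P.E 1 = 1 := by simpa using P.E_ι 1
  simp [Psi, this]

variable [CompleteSpace A]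

theorem analyticAt_inverse_one_sub (P : BanachNCPS B A) (a : A) :
    AnalyticAt ℂ (fun b : B => Ring.inverse (1 - P.ι b * a)) 0 := by
  have h1 : AnalyticAt ℂ (fun b : B => 1 - P.ι b * a) 0 :=
    analyticAt_const.sub ((P.analyticAt_ι 0).mul analyticAt_const)
  have h2 : AnalyticAt ℂ (Ring.inverse : A → A) (1 - P.ι (0 : B) * a) := by
    have := analyticAt_inverse (𝕜 := ℂ) (1 : Aˣ)
    simpa using this
  exact h2.comp_of_eq h1 rfl

theorem analyticAt_Psi (P : BanachNCPS B A) (a : A) : AnalyticAt ℂ (P.Psi a) 0 :=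
  ((P.E.analyticAt _).comp (P.analyticAt_inverse_one_sub a)).sub analyticAt_const

theorem analyticAt_Phi (P : BanachNCPS B A) (a : A) : AnalyticAt ℂ (P.Phi a) 0 :=
  (P.E.analyticAt _).comp (analyticAt_const.mul (P.analyticAt_inverse_one_sub a))

theorem Psi_eq_mul_Phi (P : BanachNCPS B A) (a : A) :
    ∀ᶠ b in 𝓝 (0 : B), P.Psi a b = b * P.Phi a b := by
  have h1 : ContinuousAt (fun b : B => 1 - P.ι b * a) 0 :=
    (analyticAt_const.sub ((P.analyticAt_ι 0).mul analyticAt_const)).continuousAt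
  have h2 : ∀ᶠ b in 𝓝 (0 : B), IsUnit (1 - P.ι b * a) :=
    h1.eventually (Units.isOpen.mem_nhds (by simp))
  filter_upwards [h2] with b hb
  have h3 : P.E (P.ι b * (a * Ring.inverse (1 - P.ι b * a))) = b * P.Phi a b := by
    have := P.cond_exp (a * Ring.inverse (1 - P.ι b * a)) b 1
    simpa [Phi] using this
  have hE : P.E 1 = 1 := by simpa using P.E_ι 1
  have h4 : Ring.inverse (1 - P.ι b * a) - 1 = P.ι b * (a * Ring.inverse (1 - P.ι b * a)) := by
    have := Ring.mul_inverse_cancel _ hb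
    rw [sub_mul, one_mul] at this
    rw [← mul_assoc, sub_eq_iff_eq_add, add_comm, ← sub_eq_iff_eq_add]
    exact this
  rw [← h3, ← h4, map_sub, hE, Psi]

variable [CompleteSpace B]

theorem exists_isLocalInverse_Psi (P : BanachNCPS B A) (a : A) (ha : IsUnit (P.E a)) :
    ∃ G : B → B, IsLocalInverse (P.Psi a) G := by
  obtain ⟨u, hu⟩ := ha
  let e : B ≃L[ℂ] B := ContinuousLinearEquiv.equivOfInverse
    ((ContinuousLinearMap.mul ℂ B).flip (u : B))
    ((ContinuousLinearMap.mul ℂ B).flip ((u⁻¹ : Bˣ) : B))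
    (fun x => by simp) (fun x => by simp)
  have hd : HasFDerivAt (P.Psi a) (e : B →L[ℂ] B) 0 := by
    have h := (hasFDerivAt_id (𝕜 := ℂ) (0 : B)).mul'
      (P.analyticAt_Phi a).differentiableAt.hasFDerivAt
    have h' := h.congr_of_eventuallyEq (P.Psi_eq_mul_Phi a)
    have he : (e : B →L[ℂ] B) = (id (0 : B)) • fderiv ℂ (P.Phi a) 0 +
        MulOpposite.op (P.Phi a 0) • ContinuousLinearMap.id ℂ B := by
      ext x
      simp [e, Phi_zero, hu]
    rw [he]
    exact h'
  have hc : ContDiffAt ℂ ⊤ (P.Psi a) 0 := (P.analyticAt_Psi a).contDiffAt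
  have hs := hc.hasStrictFDerivAt' hd (by simp)
  have h0 := P.Psi_zero a
  refine ⟨hc.localInverse hd (by simp), ?_, ?_, ?_, ?_⟩
  · have := hc.to_localInverse hd (by simp)
    rw [h0] at this
    exact this.analyticAt
  · have := hc.localInverse_apply_image hd (by simp)
    rwa [h0] at this
  · have := hs.eventually_right_inverse
    rwa [h0] at this
  · exact hs.eventually_left_inverse

/-- The local compositional inverse `Ψ_a^{⟨-1⟩}`; its germ at `0` is unique
(`isLocalInverse_unique`). -/
def PsiInv (P : BanachNCPS B A) (a : A) (ha : IsUnit (P.E a)) : B → B :=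
  (P.exists_isLocalInverse_Psi a ha).choose

theorem isLocalInverse_PsiInv (P : BanachNCPS B A) (a : A) (ha : IsUnit (P.E a)) :
    IsLocalInverse (P.Psi a) (P.PsiInv a ha) :=
  (P.exists_isLocalInverse_Psi a ha).choose_spec

theorem exists_H (P : BanachNCPS B A) (a : A) (ha : IsUnit (P.E a)) :
    ∃ H : B → B, AnalyticAt ℂ H 0 ∧ ∀ᶠ b in 𝓝 (0 : B), P.PsiInv a ha b = b * H b := by
  have hG := P.isLocalInverse_PsiInv a ha
  have hG0 := hG.map_zero
  have hT : Tendsto (P.PsiInv a ha) (𝓝 0) (𝓝 0) := by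
    have := hG.analyticAt.continuousAt.tendsto
    rwa [hG0] at this
  have hPG : AnalyticAt ℂ (fun b => P.Phi a (P.PsiInv a ha b)) 0 :=
    (P.analyticAt_Phi a).comp_of_eq hG.analyticAt hG0
  have hPG0 : P.Phi a (P.PsiInv a ha 0) = P.E a := by rw [hG0, Phi_zero]
  refine ⟨fun b => Ring.inverse (P.Phi a (P.PsiInv a ha b)), ?_, ?_⟩
  · have h2 : AnalyticAt ℂ (Ring.inverse : B → B) (P.E a) := by
      have := analyticAt_inverse (𝕜 := ℂ) ha.unit
      simpa using this
    exact h2.comp_of_eq hPG hPG0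
  · have hU : ∀ᶠ b in 𝓝 (0 : B), IsUnit (P.Phi a (P.PsiInv a ha b)) :=
      hPG.continuousAt.eventually (Units.isOpen.mem_nhds (by
        change IsUnit (P.Phi a (P.PsiInv a ha 0))
        rw [hPG0]
        exact ha))
    filter_upwards [hU, hG.right_inv, hT.eventually (P.Psi_eq_mul_Phi a)] with b h1 h2 h3
    rw [h2] at h3
    calc P.PsiInv a ha b
        = P.PsiInv a ha b * P.Phi a (P.PsiInv a ha b)
            * Ring.inverse (P.Phi a (P.PsiInv a ha b)) := by
          rw [mul_assoc, Ring.mul_inverse_cancel _ h1, mul_one]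
      _ = b * Ring.inverse (P.Phi a (P.PsiInv a ha b)) := by rw [← h3]

/-- An analytic germ `H` at `0` is determined by the germ of `b ↦ b H(b)`. -/
theorem H_unique {H H' : B → B} (hH : AnalyticAt ℂ H 0) (hH' : AnalyticAt ℂ H' 0)
    (h : ∀ᶠ b in 𝓝 (0 : B), b * H b = b * H' b) : H =ᶠ[𝓝 0] H' := by
  obtain ⟨r, hr, hball⟩ := Metric.eventually_nhds_iff_ball.1
    (hH.eventually_analyticAt.and (hH'.eventually_analyticAt.and h))
  have ht : ∀ᶠ t : ℂ in 𝓝[≠] 0, t • (1 : B) ∈ Metric.ball (0 : B) r := by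
    have hc : ContinuousAt (fun t : ℂ => t • (1 : B)) 0 := by fun_prop
    exact (hc.eventually (Metric.isOpen_ball.mem_nhds (by simpa using hr))).filter_mono nhdsWithin_le_nhds
  obtain ⟨t, htb, ht0⟩ := (ht.and self_mem_nhdsWithin).exists
  have hu : IsUnit (t • (1 : B)) := by
    rw [← Algebra.algebraMap_eq_smul_one]
    exact (IsUnit.mk0 t ht0).map (algebraMap ℂ B)
  have hev : H =ᶠ[𝓝 (t • (1 : B))] H' := by
    filter_upwards [Units.isOpen.mem_nhds hu, Metric.isOpen_ball.mem_nhds htb] with b hb hb'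
    exact (show IsUnit b from hb).mul_left_cancel (hball b hb').2.2
  have := AnalyticOnNhd.eqOn_of_preconnected_of_eventuallyEq
    (fun b hb => (hball b hb).1) (fun b hb => (hball b hb).2.1)
    (convex_ball (0 : B) r).isPreconnected htb hev
  exact Filter.eventuallyEq_of_mem (Metric.ball_mem_nhds 0 hr) this

/-- The analytic function `H_a` with `Ψ_a^{⟨-1⟩}(b) = b H_a(b)` near `0`; its germ at `0` is unique
(`H_unique`). -/
def H (P : BanachNCPS B A) (a : A) (ha : IsUnit (P.E a)) : B → B :=
  (P.exists_H a ha).choose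

theorem H_spec (P : BanachNCPS B A) (a : A) (ha : IsUnit (P.E a)) :
    AnalyticAt ℂ (P.H a ha) 0 ∧ ∀ᶠ b in 𝓝 (0 : B), P.PsiInv a ha b = b * P.H a ha b :=
  (P.exists_H a ha).choose_spec

/-- The S-transform `S_a(b) = (1 + b) H_a(b)`, as a germ of an analytic function at `0`. -/
def STransform (P : BanachNCPS B A) (a : A) (ha : IsUnit (P.E a)) (b : B) : B :=
  (1 + b) * P.H a ha b

theorem analyticAt_STransform (P : BanachNCPS B A) (a : A) (ha : IsUnit (P.E a)) :
    AnalyticAt ℂ (P.STransform a ha) 0 :=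
  (analyticAt_const.add analyticAt_id).mul (P.H_spec a ha).1

end BanachNCPS

/-- For `F` analytic near `0`, the `n`-th coefficient `F_n` of its power series expansion about `0`:
the symmetric bounded `n`-multilinear map that is `1 / n!` times the `n`-fold Fréchet derivative
of `F` at `0`. The `n`-th term of the expansion is `F_n(b,…,b)`. -/
def powerSeriesCoeff {B : Type*} [NormedRing B] [NormedAlgebra ℂ B] (F : B → B) (n : ℕ) :
    ContinuousMultilinearMap ℂ (fun _ : Fin n => B) B :=
  ((n.factorial : ℂ)⁻¹) • iteratedFDeriv ℂ n F 0

end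

open Asymptotics

/-- Differences of values of an analytic function are controlled by differences of arguments. -/
theorem AnalyticAt.isBigO_comp_sub_comp {α E F : Type*} [NormedAddCommGroup E] [NormedSpace ℂ E]
    [NormedAddCommGroup F] [NormedSpace ℂ F] {f : E → F} {x : E} (hf : AnalyticAt ℂ f x)
    {l : Filter α} {u v : α → E} (hu : Tendsto u l (𝓝 x)) (hv : Tendsto v l (𝓝 x)) :
    (fun t => f (u t) - f (v t)) =O[l] fun t => u t - v t :=
  hf.hasStrictFDerivAt.isBigO_sub.comp_tendsto (hu.prodMk_nhds hv)

/-- The terms of order at most `n` of the power series of a function that is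
`O(‖y‖ ^ (n + 1))` vanish. -/
theorem HasFPowerSeriesAt.apply_eq_zero_of_isBigO {E F : Type*} [NormedAddCommGroup E]
    [NormedSpace ℂ E] [NormedAddCommGroup F] [NormedSpace ℂ F] {f : E → F}
    {p : FormalMultilinearSeries ℂ E F} (hf : HasFPowerSeriesAt f p 0) {n : ℕ}
    (h : f =O[𝓝 0] fun y => ‖y‖ ^ (n + 1)) {k : ℕ} (hk : k ≤ n) (y : E) :
    p k (fun _ => y) = 0 := by
  induction k using Nat.strong_induction_on generalizing y with
  | _ k ih =>
    have hpow : (fun y : E => ‖y‖ ^ (n + 1)) =O[𝓝 0] fun y => ‖y‖ ^ (k + 1) := by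
      have hy : (fun y : E => ‖y‖ ^ (n - k)) =O[𝓝 0] fun _ => (1 : ℝ) :=
        (by fun_prop : Continuous fun y : E => ‖y‖ ^ (n - k)).continuousAt.tendsto.isBigO_one ℝ
      refine (hy.mul (isBigO_refl (fun y : E => ‖y‖ ^ (k + 1)) _)).congr (fun y => ?_) fun y => ?_
      · rw [← pow_add]
        congr 1
        omega
      · rw [one_mul]
    have hsum := (h.trans hpow).sub (by simpa using hf.isBigO_sub_partialSum_pow (k + 1))
    refine IsBigO.continuousMultilinearMap_apply_eq_zero (hsum.congr_left fun z => ?_) y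
    rw [sub_sub_cancel, FormalMultilinearSeries.partialSum, Finset.sum_range_succ,
      Finset.sum_eq_zero fun i hi => ?_, zero_add]
    have hi' := Finset.mem_range.1 hi
    exact ih i hi' (hi'.le.trans hk) z

/-- Two analytic functions that agree up to `O(‖b‖ ^ (n + 1))` have the same `n`-th term. -/
theorem powerSeriesCoeff_apply_eq_of_isBigO {B : Type*} [NormedRing B] [NormedAlgebra ℂ B]
    [CompleteSpace B] {F F' : B → B} (hF : AnalyticAt ℂ F 0) (hF' : AnalyticAt ℂ F' 0) {n : ℕ}
    (h : (fun b => F b - F' b) =O[𝓝 0] fun b => ‖b‖ ^ (n + 1)) (b : B) :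
    powerSeriesCoeff F n (fun _ => b) = powerSeriesCoeff F' n (fun _ => b) := by
  obtain ⟨p, r, hp⟩ := hF
  obtain ⟨q, s, hq⟩ := hF'
  have hpq := (hp.hasFPowerSeriesAt.sub hq.hasFPowerSeriesAt).apply_eq_zero_of_isBigO h le_rfl b
  have hpq' : p n (fun _ => b) = q n (fun _ => b) := sub_eq_zero.1 hpq
  simp only [powerSeriesCoeff, smul_apply]
  rw [← hp.factorial_smul b n, ← hq.factorial_smul b n, hpq']

namespace BanachNCPS

variable {B A A' : Type*} [NormedRing B] [NormedAlgebra ℂ B] [NormedRing A] [NormedAlgebra ℂ A]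
  [NormedRing A'] [NormedAlgebra ℂ A']

theorem moment_cons_one (P : BanachNCPS B A) (a : A) (k : ℕ) (b : B) :
    P.moment a (k + 1) (Fin.cons 1 fun _ => b) = P.E (a * (P.ι b * a) ^ k) := by
  simp [moment, List.ofFn_succ, List.ofFn_const, List.prod_replicate]

/-- The Taylor expansion of `Φ_a` in terms of the moment functions. -/
theorem Phi_sub_sum_moment_isBigO [CompleteSpace A] (P : BanachNCPS B A) (a : A) (n : ℕ) :
    (fun b : B => P.Phi a b -
      ∑ k ∈ Finset.range n, P.moment a (k + 1) (Fin.cons 1 fun _ => b)) =O[𝓝 0]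
      fun b => ‖b‖ ^ n := by
  have hlin : AnalyticAt ℂ (fun b : B => P.ι b * a) 0 := (P.analyticAt_ι 0).mul analyticAt_const
  have htend : Tendsto (fun b : B => P.ι b * a) (𝓝 0) (𝓝 0) := by
    simpa using hlin.continuousAt.tendsto
  have hbound : (fun b : B => P.ι b * a) =O[𝓝 0] fun b => ‖b‖ := by
    simpa using hlin.differentiableAt.isBigO_sub.norm_right
  have hinv := (P.analyticAt_inverse_one_sub a).continuousAt.tendsto.isBigO_one ℝ
  have hrem : (fun b : B => P.E (a * ((P.ι b * a) ^ n * Ring.inverse (1 - P.ι b * a)))) =O[𝓝 0]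
      fun b => ‖b‖ ^ n := by
    refine (P.E.isBigO_comp _ _).trans ?_
    simpa using (isBigO_const_const a (one_ne_zero (α := ℝ)) (𝓝 (0 : B))).mul
      ((hbound.pow n).mul hinv)
  refine hrem.congr' ?_ .rfl
  filter_upwards [htend.eventually (NormedRing.inverse_one_sub_nth_order n)] with b hb
  rw [Phi]
  conv_rhs => rw [hb]
  simp only [moment_cons_one, mul_add, Finset.mul_sum, map_add, map_sum]
  abel

theorem Phi_sub_Phi_isBigO [CompleteSpace A] [CompleteSpace A'] (P : BanachNCPS B A)
    (P' : BanachNCPS B A') (a : A) (a' : A') (n : ℕ)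
    (hmom : ∀ k : ℕ, 1 ≤ k → k ≤ n → P.moment a k = P'.moment a' k) :
    (fun b : B => P.Phi a b - P'.Phi a' b) =O[𝓝 0] fun b => ‖b‖ ^ n := by
  refine ((P.Phi_sub_sum_moment_isBigO a n).sub (P'.Phi_sub_sum_moment_isBigO a' n)).congr_left
    fun b => ?_
  rw [Finset.sum_congr rfl fun k hk => by
    rw [hmom (k + 1) (Nat.succ_pos k) (Nat.succ_le_of_lt (Finset.mem_range.1 hk))]]
  abel

theorem Psi_sub_Psi_isBigO [CompleteSpace A] [CompleteSpace A'] (P : BanachNCPS B A)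
    (P' : BanachNCPS B A') (a : A) (a' : A') (n : ℕ)
    (hmom : ∀ k : ℕ, 1 ≤ k → k ≤ n → P.moment a k = P'.moment a' k) :
    (fun b : B => P.Psi a b - P'.Psi a' b) =O[𝓝 0] fun b => ‖b‖ ^ (n + 1) := by
  have h := ((isBigO_refl (fun b : B => b) (𝓝 0)).norm_right).mul
    (P.Phi_sub_Phi_isBigO P' a a' n hmom)
  refine h.congr' ?_ (.of_forall fun b => (pow_succ' ‖b‖ n).symm)
  filter_upwards [P.Psi_eq_mul_Phi a, P'.Psi_eq_mul_Phi a'] with b h1 h2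
  rw [h1, h2, mul_sub]

theorem IsLocalInverse.tendsto {F G : B → B} (h : IsLocalInverse F G) :
    Tendsto G (𝓝 0) (𝓝 0) := by
  simpa [h.map_zero] using h.analyticAt.continuousAt.tendsto

theorem IsLocalInverse.isBigO_norm {F G : B → B} (h : IsLocalInverse F G) :
    G =O[𝓝 0] fun b => ‖b‖ := by
  simpa [h.map_zero] using h.analyticAt.differentiableAt.isBigO_sub.norm_right

/-- Functions agreeing up to order `n` have local inverses agreeing up to order `n`. -/
theorem IsLocalInverse.sub_isBigO {F F' G G' : B → B} (hG : IsLocalInverse F G)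
    (hG' : IsLocalInverse F' G') (hF : ContinuousAt F 0) (hF0 : F 0 = 0) {n : ℕ}
    (h : (fun b => F b - F' b) =O[𝓝 0] fun b => ‖b‖ ^ n) :
    (fun b => G b - G' b) =O[𝓝 0] fun b => ‖b‖ ^ n := by
  have hFt : Tendsto F (𝓝 0) (𝓝 0) := by simpa [hF0] using hF.tendsto
  have h1 := hG.analyticAt.isBigO_comp_sub_comp (hFt.comp hG'.tendsto) tendsto_id
  have h2 : (fun b => F (G' b) - F' (G' b)) =O[𝓝 0] fun b => ‖b‖ ^ n :=
    (h.comp_tendsto hG'.tendsto).trans (hG'.isBigO_norm.norm_left.pow n)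
  have h3 : (fun b => (F ∘ G') b - id b) =O[𝓝 0] fun b => ‖b‖ ^ n := by
    refine h2.congr' ?_ .rfl
    filter_upwards [hG'.right_inv] with b hb
    simp [hb]
  refine (h1.trans h3).neg_left.congr' ?_ .rfl
  filter_upwards [hG'.tendsto.eventually hG.left_inv] with b hb
  simp [hb]

variable [CompleteSpace B] [CompleteSpace A] [CompleteSpace A']

theorem tendsto_Phi_PsiInv (P : BanachNCPS B A) (a : A) (ha : IsUnit (P.E a)) :
    Tendsto (fun b => P.Phi a (P.PsiInv a ha b)) (𝓝 0) (𝓝 (P.E a)) := by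
  have h := (P.analyticAt_Phi a).continuousAt.tendsto
  rw [Phi_zero] at h
  exact h.comp (P.isLocalInverse_PsiInv a ha).tendsto

/-- `H_a(b) = Φ_a(Ψ_a^{⟨-1⟩}(b))⁻¹` near `0`. -/
theorem H_eventuallyEq (P : BanachNCPS B A) (a : A) (ha : IsUnit (P.E a)) :
    P.H a ha =ᶠ[𝓝 0] fun b => Ring.inverse (P.Phi a (P.PsiInv a ha b)) := by
  have hG := P.isLocalInverse_PsiInv a ha
  have hinv : AnalyticAt ℂ (Ring.inverse : B → B) (P.E a) := by
    simpa using analyticAt_inverse (𝕜 := ℂ) ha.unit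
  have hPG : AnalyticAt ℂ (fun b => P.Phi a (P.PsiInv a ha b)) 0 :=
    (P.analyticAt_Phi a).comp_of_eq hG.analyticAt hG.map_zero
  refine H_unique (P.H_spec a ha).1
    (hinv.comp_of_eq hPG (by rw [hG.map_zero, Phi_zero])) ?_
  filter_upwards [(P.H_spec a ha).2, hG.right_inv, hG.tendsto.eventually (P.Psi_eq_mul_Phi a),
    (P.tendsto_Phi_PsiInv a ha).eventually (Units.isOpen.mem_nhds ha)] with b h1 h2 h3 h4
  rw [← h1]
  nth_rw 2 [← h2]
  rw [h3, mul_assoc, Ring.mul_inverse_cancel _ h4, mul_one]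

theorem H_sub_H_isBigO (P : BanachNCPS B A) (P' : BanachNCPS B A') (a : A) (a' : A')
    (ha : IsUnit (P.E a)) (ha' : IsUnit (P'.E a')) (n : ℕ)
    (hmom : ∀ k : ℕ, 1 ≤ k → k ≤ n + 1 → P.moment a k = P'.moment a' k) :
    (fun b => P.H a ha b - P'.H a' ha' b) =O[𝓝 0] fun b => ‖b‖ ^ (n + 1) := by
  have hG := P.isLocalInverse_PsiInv a ha
  have hG' := P'.isLocalInverse_PsiInv a' ha'
  have hE : P.E a = P'.E a' := by
    simpa [moment] using congrFun (hmom 1 le_rfl (Nat.succ_pos n)) fun _ => 1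
  have hpow : (fun b : B => ‖b‖ ^ (n + 1 + 1)) =O[𝓝 0] fun b => ‖b‖ ^ (n + 1) := by
    have hb : (fun b : B => ‖b‖) =O[𝓝 0] fun _ => (1 : ℝ) :=
      continuous_norm.continuousAt.tendsto.isBigO_one ℝ
    simpa [pow_succ] using (isBigO_refl (fun b : B => ‖b‖ ^ (n + 1)) (𝓝 0)).mul hb
  have hGG := (hG.sub_isBigO hG' (P.analyticAt_Psi a).continuousAt (P.Psi_zero a)
    (P.Psi_sub_Psi_isBigO P' a a' (n + 1) hmom)).trans hpow
  have h1 := ((P.analyticAt_Phi a).isBigO_comp_sub_comp hG.tendsto hG'.tendsto).trans hGG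
  have h2 : (fun b => P.Phi a (P'.PsiInv a' ha' b) - P'.Phi a' (P'.PsiInv a' ha' b)) =O[𝓝 0]
      fun b => ‖b‖ ^ (n + 1) :=
    ((P.Phi_sub_Phi_isBigO P' a a' (n + 1) hmom).comp_tendsto hG'.tendsto).trans
      (hG'.isBigO_norm.norm_left.pow (n + 1))
  have hinv : AnalyticAt ℂ (Ring.inverse : B → B) (P.E a) := by
    simpa using analyticAt_inverse (𝕜 := ℂ) ha.unit
  have h3 := hinv.isBigO_comp_sub_comp (P.tendsto_Phi_PsiInv a ha)
    (by rw [hE]; exact P'.tendsto_Phi_PsiInv a' ha')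
  refine (h3.trans ((h1.add h2).congr_left fun b => sub_add_sub_cancel _ _ _)).congr' ?_ .rfl
  filter_upwards [P.H_eventuallyEq a ha, P'.H_eventuallyEq a' ha'] with b e1 e2
  rw [e1, e2]

theorem STransform_sub_STransform_isBigO (P : BanachNCPS B A) (P' : BanachNCPS B A') (a : A)
    (a' : A') (ha : IsUnit (P.E a)) (ha' : IsUnit (P'.E a')) (n : ℕ)
    (hmom : ∀ k : ℕ, 1 ≤ k → k ≤ n + 1 → P.moment a k = P'.moment a' k) :
    (fun b => P.STransform a ha b - P'.STransform a' ha' b) =O[𝓝 0]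
      fun b => ‖b‖ ^ (n + 1) := by
  have h1 : (fun b : B => 1 + b) =O[𝓝 0] fun _ => (1 : ℝ) :=
    (by fun_prop : Continuous fun b : B => 1 + b).continuousAt.tendsto.isBigO_one ℝ
  simpa [STransform, mul_sub] using h1.mul (P.H_sub_H_isBigO P' a a' ha ha' n hmom)

end BanachNCPS

/-- The `n`-th term of the power series expansion about `0` of the S-transform depends only on the
first `n + 1` moment functions. -/
theorem stmt_6 {B A A' : Type*}
    [NormedRing B] [NormedAlgebra ℂ B] [CompleteSpace B]
    [NormedRing A] [NormedAlgebra ℂ A] [CompleteSpace A]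
    [NormedRing A'] [NormedAlgebra ℂ A'] [CompleteSpace A']
    (P : BanachNCPS B A) (P' : BanachNCPS B A') (a : A) (a' : A')
    (ha : IsUnit (P.E a)) (ha' : IsUnit (P'.E a')) (n : ℕ)
    (hmom : ∀ k : ℕ, 1 ≤ k → k ≤ n + 1 → P.moment a k = P'.moment a' k) :
    ∀ b : B, powerSeriesCoeff (P.STransform a ha) n (fun _ => b) =
      powerSeriesCoeff (P'.STransform a' ha') n (fun _ => b) := by
  intro b
  exact powerSeriesCoeff_apply_eq_of_isBigO (P.analyticAt_STransform a ha)
    (P'.analyticAt_STransform a' ha')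
    (P.STransform_sub_STransform_isBigO P' a a' ha ha' n hmom) b
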